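/- Let ‖·‖ be a decomposable norm on ℝ^n all of whose unit-ball extreme points have unit ‖·‖_u-norm. For x ∈ ℝ^n \ {0} define l(x) as the minimal l such that x = Σ_{i=1}^l αᵢ bᵢ for some b₁, …, b_l in the extreme-point set G and αᵢ ∈ ℝ, and set l(0) = 0. Then l(x) = K(x) for all x ∈ ℝ^n. -/

import Mathlib

/-!
Every `x` has a decomposition `x = ∑ μ j • c j` with `μ j > 0` and `c` a *frame*: a finite family of
extreme points with `∑ |⟪c j, y⟫| ≤ N y` for all `y`. It is found by repeatedly subtracting the
extreme point with the largest inner product, scaled by that inner product; decomposability at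
that point puts the remainder, and all points found later, in the complement `(T a)ᗮ`. The number
`k` of terms equals `K x` (`Kfun_eq_card`), so `l x ≤ K x`, and it remains to show that a
combination of `l` extreme points never needs a frame with more than `l` elements
(`card_le_of_combination`).

For two frames `c`, `d` the matrix `⟪c i, d j⟫` has absolute row and column sums at most one. This
doubly substochastic pairing shows that the spectral function `F x = ∑ w (μ j)`, with
`w t = t / (1 + t)`, is well defined, and that it has a quadratic lower model with gradient
`g = ∑ dw (μ j) c j`, where `dw` is the derivative of `w` (`sum_w_tangent`); in particular `F` is
continuous. It shows also that two frame expansions of one vector have equal coefficients, up to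
sign, at every pair of non-orthogonal frame elements (`coeff_eq`).

Suppose that a combination of `l` extreme points has a frame of size larger than `l`. After scaling
it up, its value of `F` exceeds `l`, and still does so after subtracting a small multiple
`ε ∑ α i ^ 2`. Maximize `F (∑ α i b i) - ε ∑ α i ^ 2` over all coefficients and all extreme points;
let `x = ∑ α i b i = ∑ μ j c j` at the maximizer. Since the maximum exceeds `l`, this frame has more
than `l` elements. The first-order conditions say that `g = 2 ε α i b i + v` with `v` in the
complement at `b i` (`exists_expansion`). Comparing this expansion with `g = ∑ dw (μ j) c j` by
`coeff_eq`, whenever `⟪c j, b i⟫` and `α i` are nonzero, `dw (μ j)` equals `2 ε |α i|` and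
`⟪c j, b i⟫` has the sign of `α i`. Writing `μ j = ⟪x, c j⟫` in terms of the `b i` then gives
`∑ i, |⟪c j, b i⟫| ≥ 1` for each `j`, and summing over `j` bounds the size of the frame by `l`
(`card_le_of_expansion`), a contradiction.
-/

open Matrix

namespace PGH

variable {n m : ℕ}

/-- The inner product `⟪x, y⟫ = xᵀ B y` on `ℝⁿ` induced by a matrix `B`. -/
def ip (B : Matrix (Fin n) (Fin n) ℝ) (x y : Fin n → ℝ) : ℝ :=
  dotProduct x (B.mulVec y)

/-- The norm `‖x‖ᵤ = √(xᵀ B x)` induced by the inner product. -/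
noncomputable def normu (B : Matrix (Fin n) (Fin n) ℝ) (x : Fin n → ℝ) : ℝ :=
  Real.sqrt (ip B x x)

/-- `N` is a norm on `ℝⁿ`. -/
structure IsNorm (N : (Fin n → ℝ) → ℝ) : Prop where
  nonneg : ∀ x, 0 ≤ N x
  eq_zero_iff : ∀ x, N x = 0 ↔ x = 0
  triangle : ∀ x y, N (x + y) ≤ N x + N y
  smul_eq : ∀ (c : ℝ) (x), N (c • x) = |c| * N x

/-- The dual norm `‖y‖* = sup {⟪y, x⟫ : N x ≤ 1}`. -/
noncomputable def dualNorm (B : Matrix (Fin n) (Fin n) ℝ) (N : (Fin n → ℝ) → ℝ)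
    (y : Fin n → ℝ) : ℝ :=
  sSup ((fun x => ip B y x) '' {x | N x ≤ 1})

/-- The subdifferential of `N` at `x` with respect to `⟪·,·⟫`. -/
def subdiff (B : Matrix (Fin n) (Fin n) ℝ) (N : (Fin n → ℝ) → ℝ) (x : Fin n → ℝ) :
    Set (Fin n → ℝ) :=
  {z | ∀ y, N x + ip B z (y - x) ≤ N y}

/-- The set `G` of extreme points of the unit ball of `N`. -/
def extPts (N : (Fin n → ℝ) → ℝ) : Set (Fin n → ℝ) :=
  Set.extremePoints ℝ {x | N x ≤ 1}

/-- The orthogonal complement (w.r.t. `⟪·,·⟫`) of a subspace `T`, as a set. -/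
def perp (B : Matrix (Fin n) (Fin n) ℝ) (T : Submodule ℝ (Fin n → ℝ)) :
    Set (Fin n → ℝ) :=
  {v | ∀ u ∈ T, ip B u v = 0}

/-- A decomposability structure for the norm `N`: for every `x` there are a subspace `T x`
and a vector `e x ∈ T x` with `∂N(x) = {e x + v : v ∈ (T x)ᗮ, ‖v‖* ≤ 1}`. -/
structure DecompStruct (B : Matrix (Fin n) (Fin n) ℝ) (N : (Fin n → ℝ) → ℝ) where
  T : (Fin n → ℝ) → Submodule ℝ (Fin n → ℝ)
  e : (Fin n → ℝ) → (Fin n → ℝ)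
  e_mem : ∀ x, e x ∈ T x
  subdiff_eq : ∀ x, subdiff B N x =
    {ξ | ∃ v ∈ perp B (T x), dualNorm B N v ≤ 1 ∧ ξ = e x + v}

/-- `K x = ‖e x‖ᵤ²`. -/
noncomputable def Kfun (B : Matrix (Fin n) (Fin n) ℝ) (N : (Fin n → ℝ) → ℝ)
    (D : DecompStruct B N) (x : Fin n → ℝ) : ℝ :=
  (normu B (D.e x)) ^ 2

/-- Squared Euclidean norm `‖v‖₂²` on `ℝᵐ`. -/
def sq2 (v : Fin m → ℝ) : ℝ := dotProduct v v

/-- The least-squares loss `f(x) = ½ ‖A x - b‖₂²`. -/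
noncomputable def fls (A : Matrix (Fin m) (Fin n) ℝ) (b : Fin m → ℝ) (x : Fin n → ℝ) : ℝ :=
  (1 / 2) * sq2 (A.mulVec x - b)

/-- The adjoint `A* = B⁻¹ Aᵀ` of `A` w.r.t. `⟪·,·⟫`. -/
noncomputable def Astar (B : Matrix (Fin n) (Fin n) ℝ) (A : Matrix (Fin m) (Fin n) ℝ) :
    Matrix (Fin n) (Fin m) ℝ := B⁻¹ * Aᵀ

/-- The gradient `∇f(x) = A*(A x - b)` of the least-squares loss w.r.t. `⟪·,·⟫`. -/
noncomputable def gradf (B : Matrix (Fin n) (Fin n) ℝ) (A : Matrix (Fin m) (Fin n) ℝ)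
    (b : Fin m → ℝ) (x : Fin n → ℝ) : Fin n → ℝ :=
  (Astar B A).mulVec (A.mulVec x - b)

/-- `ρ` is a valid lower restricted isometry constant of `A` at level `k`. -/
def IsLowerRIP (B : Matrix (Fin n) (Fin n) ℝ) (N : (Fin n → ℝ) → ℝ)
    (A : Matrix (Fin m) (Fin n) ℝ) (k ρ : ℝ) : Prop :=
  0 < ρ ∧ ∀ x : Fin n → ℝ, (N x) ^ 2 ≤ k * (normu B x) ^ 2 →
    ρ * (normu B x) ^ 2 ≤ sq2 (A.mulVec x)

/-- `ρ` is a valid upper restricted isometry constant of `A` at level `k`. -/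
def IsUpperRIP (B : Matrix (Fin n) (Fin n) ℝ) (N : (Fin n → ℝ) → ℝ)
    (A : Matrix (Fin m) (Fin n) ℝ) (k ρ : ℝ) : Prop :=
  0 < ρ ∧ ∀ x : Fin n → ℝ, (N x) ^ 2 ≤ k * (normu B x) ^ 2 →
    sq2 (A.mulVec x) ≤ ρ * (normu B x) ^ 2

/-- The regularized objective `φ_λ(x) = f(x) + λ N(x)`. -/
noncomputable def phi (A : Matrix (Fin m) (Fin n) ℝ) (b : Fin m → ℝ)
    (N : (Fin n → ℝ) → ℝ) (lam : ℝ) (x : Fin n → ℝ) : ℝ :=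
  fls A b x + lam * N x

/-- The proximal model `m_{λ,L}(y, x)`. -/
noncomputable def mdl (B : Matrix (Fin n) (Fin n) ℝ) (A : Matrix (Fin m) (Fin n) ℝ)
    (b : Fin m → ℝ) (N : (Fin n → ℝ) → ℝ) (lam L : ℝ) (y x : Fin n → ℝ) : ℝ :=
  fls A b y + ip B (gradf B A b y) (x - y) + (L / 2) * (normu B (x - y)) ^ 2 + lam * N x

/-- `xp = Prox_{λ,L}(y)`, i.e. `xp` minimizes `m_{λ,L}(y, ·)`. -/
def IsProx (B : Matrix (Fin n) (Fin n) ℝ) (A : Matrix (Fin m) (Fin n) ℝ)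
    (b : Fin m → ℝ) (N : (Fin n → ℝ) → ℝ) (lam L : ℝ) (y xp : Fin n → ℝ) : Prop :=
  ∀ u, mdl B A b N lam L y xp ≤ mdl B A b N lam L y u

/-- `ω_λ(x) = min_{ξ ∈ ∂N(x)} ‖λ ξ + ∇f(x)‖*`. -/
noncomputable def omega (B : Matrix (Fin n) (Fin n) ℝ) (A : Matrix (Fin m) (Fin n) ℝ)
    (b : Fin m → ℝ) (N : (Fin n → ℝ) → ℝ) (lam : ℝ) (x : Fin n → ℝ) : ℝ :=
  sInf ((fun ξ => dualNorm B N (lam • ξ + gradf B A b x)) '' subdiff B N x)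

/-- Assumption 1 of the paper, phrased for given valid restricted isometry constants
`ρlow = ρ₋(A, c k₀ (1+γ)²)`, `ρlow2 = ρ₋(A, 72 r c k₀ (1+γ) γinc)` and
`ρup2 = ρ₊(A, 72 r c k₀ (1+γ) γinc)`. -/
def Assumption1 (B : Matrix (Fin n) (Fin n) ℝ) (N : (Fin n → ℝ) → ℝ)
    (A : Matrix (Fin m) (Fin n) ℝ) (z : Fin m → ℝ)
    (c k₀ γinc lamtgt r δ γ ρlow ρlow2 ρup2 : ℝ) : Prop :=
  dualNorm B N ((Astar B A).mulVec z) ≤ lamtgt / 4 ∧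
  1 < r ∧ 0 < δ ∧ δ ≤ 1 / 4 ∧
  γ = (lamtgt * (1 + δ) + dualNorm B N ((Astar B A).mulVec z)) /
      (lamtgt * (1 - δ) - dualNorm B N ((Astar B A).mulVec z)) ∧
  IsLowerRIP B N A (c * k₀ * (1 + γ) ^ 2) ρlow ∧
  IsLowerRIP B N A (72 * r * c * k₀ * (1 + γ) * γinc) ρlow2 ∧
  IsUpperRIP B N A (72 * r * c * k₀ * (1 + γ) * γinc) ρup2 ∧
  ρlow / ρup2 > c / r

/-- One backtracking step: `M` is the smallest element of `{Lt γinc^j : j ≥ 0}`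
for which the proximal point is accepted, and `xt1` is that proximal point. -/
def BacktrackMin (B : Matrix (Fin n) (Fin n) ℝ) (A : Matrix (Fin m) (Fin n) ℝ)
    (b : Fin m → ℝ) (N : (Fin n → ℝ) → ℝ) (lam γinc Lt : ℝ)
    (xt : Fin n → ℝ) (M : ℝ) (xt1 : Fin n → ℝ) : Prop :=
  (∃ j : ℕ, M = Lt * γinc ^ j) ∧
  IsProx B A b N lam M xt xt1 ∧
  phi A b N lam xt1 ≤ mdl B A b N lam M xt xt1 ∧
  ∀ j : ℕ, Lt * γinc ^ j < M →
    ∀ u, IsProx B A b N lam (Lt * γinc ^ j) xt u →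
      ¬ phi A b N lam u ≤ mdl B A b N lam (Lt * γinc ^ j) xt u

/-- The iterates of the proximal-gradient subroutine with backtracking. -/
structure ProxGradSeq (B : Matrix (Fin n) (Fin n) ℝ) (A : Matrix (Fin m) (Fin n) ℝ)
    (b : Fin m → ℝ) (N : (Fin n → ℝ) → ℝ) (lam γinc γdec Lmin : ℝ)
    (x : ℕ → Fin n → ℝ) (L M : ℕ → ℝ) : Prop where
  step : ∀ t, BacktrackMin B A b N lam γinc (L t) (x t) (M (t + 1)) (x (t + 1))
  Lupdate : ∀ t, L (t + 1) = max Lmin (M (t + 1) / γdec)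

/-- The quantity `‖M (x⁻ - x) + ∇f(x) - ∇f(x⁻)‖*` used in the stopping criterion. -/
noncomputable def stopQ (B : Matrix (Fin n) (Fin n) ℝ) (A : Matrix (Fin m) (Fin n) ℝ)
    (b : Fin m → ℝ) (N : (Fin n → ℝ) → ℝ) (Mt : ℝ) (xprev xcur : Fin n → ℝ) : ℝ :=
  dualNorm B N (Mt • (xprev - xcur) + (gradf B A b xcur - gradf B A b xprev))


/-- `l(x)`: the minimal number of extreme points of the unit ball of `N` needed to write `x`
as a linear combination (with `l 0 = 0`). -/
noncomputable def lfun {n : ℕ} (N : (Fin n → ℝ) → ℝ) (x : Fin n → ℝ) : ℕ :=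
  sInf {l : ℕ | ∃ (bb : Fin l → Fin n → ℝ) (α : Fin l → ℝ),
    (∀ i, bb i ∈ extPts N) ∧ x = ∑ i, α i • bb i}

/-! ### The inner product, the norm and the extreme points -/

section Bilinear
variable (B : Matrix (Fin n) (Fin n) ℝ)

lemma ip_add_left (x y z : Fin n → ℝ) : ip B (x + y) z = ip B x z + ip B y z := by
  simp [ip, add_dotProduct]

lemma ip_add_right (x y z : Fin n → ℝ) : ip B x (y + z) = ip B x y + ip B x z := by
  simp [ip, Matrix.mulVec_add, dotProduct_add]

lemma ip_smul_left (c : ℝ) (x y : Fin n → ℝ) : ip B (c • x) y = c * ip B x y := by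
  simp [ip, smul_dotProduct]

lemma ip_smul_right (c : ℝ) (x y : Fin n → ℝ) : ip B x (c • y) = c * ip B x y := by
  simp [ip, Matrix.mulVec_smul, dotProduct_smul]

lemma ip_neg_left (x y : Fin n → ℝ) : ip B (-x) y = -ip B x y := by
  simp [ip]

lemma ip_neg_right (x y : Fin n → ℝ) : ip B x (-y) = -ip B x y := by
  simp [ip, Matrix.mulVec_neg]

lemma ip_sub_left (x y z : Fin n → ℝ) : ip B (x - y) z = ip B x z - ip B y z := by
  simp [ip, sub_dotProduct]

lemma ip_sub_right (x y z : Fin n → ℝ) : ip B x (y - z) = ip B x y - ip B x z := by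
  simp [ip, Matrix.mulVec_sub, dotProduct_sub]

lemma ip_zero_left (x : Fin n → ℝ) : ip B 0 x = 0 := by simp [ip]

lemma ip_zero_right (x : Fin n → ℝ) : ip B x 0 = 0 := by simp [ip]

lemma ip_sum_left {ι : Type*} (s : Finset ι) (f : ι → Fin n → ℝ) (y : Fin n → ℝ) :
    ip B (∑ i ∈ s, f i) y = ∑ i ∈ s, ip B (f i) y := by
  simp [ip, sum_dotProduct]

lemma ip_sum_right {ι : Type*} (s : Finset ι) (f : ι → Fin n → ℝ) (y : Fin n → ℝ) :
    ip B y (∑ i ∈ s, f i) = ∑ i ∈ s, ip B y (f i) := by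
  simp [ip, Matrix.mulVec_sum, dotProduct_sum]

lemma continuous_ip : Continuous fun p : (Fin n → ℝ) × (Fin n → ℝ) => ip B p.1 p.2 := by
  unfold ip
  fun_prop

end Bilinear

section PosDef
variable {B : Matrix (Fin n) (Fin n) ℝ}

lemma ip_comm (hB : B.PosDef) (x y : Fin n → ℝ) : ip B x y = ip B y x := by
  have h : Bᵀ = B := by simpa using hB.isHermitian.eq
  unfold ip
  rw [Matrix.dotProduct_mulVec, dotProduct_comm, ← Matrix.mulVec_transpose, h]

lemma ip_self_nonneg (hB : B.PosDef) (x : Fin n → ℝ) : 0 ≤ ip B x x := by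
  simpa [ip] using hB.posSemidef.dotProduct_mulVec_nonneg x

lemma eq_zero_of_ip_self (hB : B.PosDef) {x : Fin n → ℝ} (h : ip B x x ≤ 0) : x = 0 := by
  by_contra hx
  have := hB.dotProduct_mulVec_pos hx
  simp only [star_trivial] at this
  exact absurd h (not_le.mpr this)

lemma normu_sq (hB : B.PosDef) (x : Fin n → ℝ) : normu B x ^ 2 = ip B x x :=
  Real.sq_sqrt (ip_self_nonneg hB x)

lemma ip_sq_le (hB : B.PosDef) (x y : Fin n → ℝ) : ip B x y ^ 2 ≤ ip B x x * ip B y y := by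
  have key : ∀ t : ℝ, 0 ≤ ip B y y * (t * t) + (2 * ip B x y) * t + ip B x x := by
    intro t
    have h := ip_self_nonneg hB (x + t • y)
    simp only [ip_add_left, ip_add_right, ip_smul_left, ip_smul_right, ip_comm hB y x] at h
    linarith
  have := discrim_le_zero key
  unfold discrim at this
  nlinarith

lemma ip_le_normu (hB : B.PosDef) (x y : Fin n → ℝ) : ip B x y ≤ normu B x * normu B y := by
  unfold normu
  rw [← Real.sqrt_mul (ip_self_nonneg hB x)]
  exact Real.le_sqrt_of_sq_le (ip_sq_le hB x y)

end PosDef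

section Norm
variable {N : (Fin n → ℝ) → ℝ}

lemma IsNorm.map_zero (hN : IsNorm N) : N 0 = 0 := (hN.eq_zero_iff 0).2 rfl

lemma IsNorm.map_neg (hN : IsNorm N) (x : Fin n → ℝ) : N (-x) = N x := by
  have := hN.smul_eq (-1) x
  simpa using this

lemma IsNorm.smul_nonneg (hN : IsNorm N) {c : ℝ} (hc : 0 ≤ c) (x : Fin n → ℝ) :
    N (c • x) = c * N x := by rw [hN.smul_eq, abs_of_nonneg hc]

lemma IsNorm.sum_le (hN : IsNorm N) {ι : Type*} (s : Finset ι) (f : ι → Fin n → ℝ) :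
    N (∑ i ∈ s, f i) ≤ ∑ i ∈ s, N (f i) := by
  classical
  induction s using Finset.induction_on with
  | empty => simp [hN.map_zero]
  | insert a s ha ih =>
    rw [Finset.sum_insert ha, Finset.sum_insert ha]
    exact (hN.triangle _ _).trans (by linarith)

lemma IsNorm.continuous (hN : IsNorm N) : Continuous N := by
  let C : ℝ := ∑ i : Fin n, N (Pi.single i 1)
  have hC : ∀ x, N x ≤ C * ‖x‖ := by
    intro x
    have hx : x = ∑ i, x i • (Pi.single i 1 : Fin n → ℝ) := by
      ext j
      simp [Finset.sum_apply, Pi.single_apply]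
    calc N x = N (∑ i, x i • (Pi.single i 1 : Fin n → ℝ)) := by rw [← hx]
      _ ≤ ∑ i, N (x i • (Pi.single i 1 : Fin n → ℝ)) := hN.sum_le _ _
      _ ≤ ∑ i, N (Pi.single i 1) * ‖x‖ := by
        refine Finset.sum_le_sum fun i _ => ?_
        rw [hN.smul_eq, mul_comm]
        exact mul_le_mul_of_nonneg_left (norm_le_pi_norm x i) (hN.nonneg _)
      _ = C * ‖x‖ := by rw [Finset.sum_mul]
  have hC0 : 0 ≤ C := Finset.sum_nonneg fun i _ => hN.nonneg _
  have hlip : LipschitzWith ⟨C, hC0⟩ N := by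
    refine LipschitzWith.of_le_add_mul _ fun x y => ?_
    have h1 := hN.triangle y (x - y)
    have h2 := hC (x - y)
    rw [add_sub_cancel] at h1
    rw [dist_eq_norm]
    exact h1.trans (add_le_add le_rfl h2)
  exact hlip.continuous

lemma IsNorm.isCompact_ball (hN : IsNorm N) : IsCompact {x | N x ≤ 1} := by
  have hcl : IsClosed {x | N x ≤ 1} := isClosed_le hN.continuous continuous_const
  obtain ⟨r, hr0, hr⟩ : ∃ r > 0, ∀ x : Fin n → ℝ, ‖x‖ = 1 → r ≤ N x := by
    by_cases hne : (Metric.sphere (0 : Fin n → ℝ) 1).Nonempty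
    · obtain ⟨x, hx, hmin⟩ := (isCompact_sphere (0 : Fin n → ℝ) 1).exists_isMinOn hne
        hN.continuous.continuousOn
      refine ⟨N x, ?_, fun y hy => hmin (by simpa using hy)⟩
      refine lt_of_le_of_ne (hN.nonneg x) fun h => ?_
      rw [(hN.eq_zero_iff x).1 h.symm] at hx
      simp at hx
    · exact ⟨1, one_pos, fun x hx => absurd ⟨x, by simpa using hx⟩ hne⟩
  refine Metric.isCompact_of_isClosed_isBounded hcl ?_
  refine (Metric.isBounded_iff_subset_closedBall 0).2 ⟨r⁻¹, fun x hx => ?_⟩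
  rw [mem_closedBall_zero_iff]
  by_cases h0 : x = 0
  · simp [h0, hr0.le]
  have hx0 : 0 < ‖x‖ := norm_pos_iff.2 h0
  have h1 := hr (‖x‖⁻¹ • x) (by rw [norm_smul, norm_inv, norm_norm, inv_mul_cancel₀ hx0.ne'])
  rw [hN.smul_nonneg (inv_nonneg.2 hx0.le)] at h1
  have h2 : N x ≤ 1 := hx
  rw [le_inv_comm₀ hx0 hr0]
  calc r ≤ ‖x‖⁻¹ * N x := h1
    _ ≤ ‖x‖⁻¹ * 1 := by gcongr
    _ = _ := mul_one _

end Norm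

/-- `‖y‖* ≤ 1`, written without a supremum. -/
def DualLe (B : Matrix (Fin n) (Fin n) ℝ) (N : (Fin n → ℝ) → ℝ) (y : Fin n → ℝ) : Prop :=
  ∀ z, ip B y z ≤ N z

/-- The vectors of the unit ball of `N` that have unit length for the inner product. Under the
hypotheses of the theorem these are exactly the extreme points of the ball. -/
def atoms (B : Matrix (Fin n) (Fin n) ℝ) (N : (Fin n → ℝ) → ℝ) : Set (Fin n → ℝ) :=
  {a | N a ≤ 1 ∧ ip B a a = 1}

/-- The standing hypotheses on the inner product and the norm. -/
structure Good (B : Matrix (Fin n) (Fin n) ℝ) (N : (Fin n → ℝ) → ℝ) : Prop where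
  pos : B.PosDef
  norm : IsNorm N
  ext : ∀ a ∈ extPts N, normu B a = 1

section Atoms
variable {B : Matrix (Fin n) (Fin n) ℝ} {N : (Fin n → ℝ) → ℝ}

lemma dualNorm_le_one_iff (h : Good B N) (y : Fin n → ℝ) :
    dualNorm B N y ≤ 1 ↔ DualLe B N y := by
  have hcont : Continuous fun x => ip B y x :=
    (continuous_ip B).comp (continuous_const.prodMk continuous_id)
  have hbdd : BddAbove ((fun x => ip B y x) '' {x | N x ≤ 1}) :=
    (h.norm.isCompact_ball.image hcont).bddAbove
  constructor
  · intro hy z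
    by_cases hz : z = 0
    · rw [hz, ip_zero_right, h.norm.map_zero]
    have hz0 : 0 < N z := lt_of_le_of_ne (h.norm.nonneg z)
      fun hh => hz ((h.norm.eq_zero_iff z).1 hh.symm)
    have h1 : ip B y ((N z)⁻¹ • z) ≤ 1 := by
      refine le_trans (le_csSup hbdd ⟨(N z)⁻¹ • z, ?_, rfl⟩) hy
      change N _ ≤ 1
      rw [h.norm.smul_nonneg (inv_nonneg.2 hz0.le), inv_mul_cancel₀ hz0.ne']
    rw [ip_smul_right, inv_mul_le_iff₀ hz0, mul_one] at h1
    exact h1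
  · intro hy
    refine csSup_le ⟨_, 0, by simp [h.norm.map_zero], rfl⟩ ?_
    rintro _ ⟨x, hx, rfl⟩
    exact (hy x).trans hx

lemma extPts_subset_atoms (h : Good B N) : extPts N ⊆ atoms B N := fun a ha =>
  ⟨ha.1, by rw [← normu_sq h.pos, h.ext a ha, one_pow]⟩

/-- By the Krein–Milman theorem, a bound for a linear functional on the atoms is a bound for its
dual norm. -/
lemma ip_le_of_atoms (h : Good B N) {y : Fin n → ℝ} {γ : ℝ}
    (hy : ∀ a ∈ atoms B N, ip B y a ≤ γ) (z : Fin n → ℝ) : ip B y z ≤ γ * N z := by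
  have hconv : Convex ℝ {x | N x ≤ 1} := by
    intro x hx z hz s t hs ht hst
    change N _ ≤ 1
    have hx' : N x ≤ 1 := hx
    have hz' : N z ≤ 1 := hz
    have := h.norm.triangle (s • x) (t • z)
    rw [h.norm.smul_nonneg hs, h.norm.smul_nonneg ht] at this
    nlinarith
  have hKM := closure_convexHull_extremePoints h.norm.isCompact_ball hconv
  have hsub : {x | N x ≤ 1} ⊆ {x | ip B y x ≤ γ} := by
    rw [← hKM]
    refine closure_minimal (convexHull_min ?_ ?_) ?_
    · intro a ha
      exact hy a (extPts_subset_atoms h ha)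
    · intro u hu v hv s t hs ht hst
      change ip B y _ ≤ γ
      have hu' : ip B y u ≤ γ := hu
      have hv' : ip B y v ≤ γ := hv
      rw [ip_add_right, ip_smul_right, ip_smul_right]
      have : γ = s * γ + t * γ := by rw [← add_mul, hst, one_mul]
      rw [this]
      gcongr
    · exact isClosed_le ((continuous_ip B).comp (continuous_const.prodMk continuous_id))
        continuous_const
  by_cases hz : z = 0
  · rw [hz, ip_zero_right, h.norm.map_zero, mul_zero]
  have hz0 : 0 < N z := lt_of_le_of_ne (h.norm.nonneg z)
    fun hh => hz ((h.norm.eq_zero_iff z).1 hh.symm)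
  have h1 : ip B y ((N z)⁻¹ • z) ≤ γ := by
    refine hsub ?_
    change N _ ≤ 1
    rw [h.norm.smul_nonneg (inv_nonneg.2 hz0.le), inv_mul_cancel₀ hz0.ne']
  rw [ip_smul_right, inv_mul_le_iff₀ hz0] at h1
  linarith

lemma ip_le_normu_mul (h : Good B N) (y z : Fin n → ℝ) : ip B y z ≤ normu B y * N z := by
  refine ip_le_of_atoms h (fun a ha => ?_) z
  have h1 : normu B a = 1 := by rw [normu, ha.2, Real.sqrt_one]
  simpa [h1] using ip_le_normu h.pos y a

lemma normu_le (h : Good B N) (x : Fin n → ℝ) : normu B x ≤ N x := by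
  by_contra hlt
  push Not at hlt
  have h1 := ip_le_normu_mul h x x
  rw [← normu_sq h.pos] at h1
  have h2 := h.norm.nonneg x
  nlinarith

lemma ip_self_le (h : Good B N) (x : Fin n → ℝ) : ip B x x ≤ N x ^ 2 := by
  rw [← normu_sq h.pos]
  have := normu_le h x
  have h0 : 0 ≤ normu B x := Real.sqrt_nonneg _
  gcongr

lemma normu_atom {a : Fin n → ℝ} (ha : a ∈ atoms B N) : normu B a = 1 := by
  rw [normu, ha.2, Real.sqrt_one]

lemma N_atom (h : Good B N) {a : Fin n → ℝ} (ha : a ∈ atoms B N) : N a = 1 :=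
  le_antisymm ha.1 (by rw [← normu_atom ha]; exact normu_le h a)

lemma dualLe_atom (h : Good B N) {a : Fin n → ℝ} (ha : a ∈ atoms B N) : DualLe B N a := by
  intro z
  simpa [normu_atom ha] using ip_le_normu_mul h a z

lemma DualLe.neg (h : Good B N) {y : Fin n → ℝ} (hy : DualLe B N y) : DualLe B N (-y) := by
  intro z
  have := hy (-z)
  rwa [ip_neg_right, h.norm.map_neg, ← ip_neg_left] at this

lemma neg_mem_atoms (h : Good B N) {a : Fin n → ℝ} (ha : a ∈ atoms B N) : -a ∈ atoms B N :=
  ⟨by rw [h.norm.map_neg]; exact ha.1, by rw [ip_neg_left, ip_neg_right, neg_neg]; exact ha.2⟩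

/-- Points of the unit ball lying on the Euclidean sphere are extreme, because the ball is
contained in the strictly convex Euclidean ball. -/
lemma atoms_subset_extPts (h : Good B N) : atoms B N ⊆ extPts N := by
  intro a ha
  refine ⟨ha.1, ?_⟩
  intro x hx y hy hseg
  obtain ⟨s, t, hs, ht, hst, rfl⟩ := hseg
  have hx1 : ip B x x ≤ 1 := (ip_self_le h x).trans (pow_le_one₀ (h.norm.nonneg x) hx)
  have hxa := (dualLe_atom h ha x).trans hx
  have hya := (dualLe_atom h ha y).trans hy
  set a := s • x + t • y with hadef
  have h1 : s * ip B a x + t * ip B a y = 1 := by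
    rw [← ha.2, ← ip_smul_right, ← ip_smul_right, ← ip_add_right]
  have h2 : ip B a x = 1 := by
    refine le_antisymm hxa ?_
    by_contra hlt
    push Not at hlt
    nlinarith
  have h3 : x - a = 0 := by
    refine eq_zero_of_ip_self h.pos ?_
    rw [ip_sub_left, ip_sub_right, ip_sub_right, ip_comm h.pos x a, h2, ha.2]
    linarith
  exact sub_eq_zero.1 h3

lemma isCompact_atoms (h : Good B N) : IsCompact (atoms B N) := by
  refine h.norm.isCompact_ball.of_isClosed_subset ?_ fun a ha => ha.1
  exact (isClosed_le h.norm.continuous continuous_const).inter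
    (isClosed_eq ((continuous_ip B).comp (continuous_id.prodMk continuous_id)) continuous_const)

lemma atoms_nonempty (h : Good B N) : (atoms B N).Nonempty :=
  (h.norm.isCompact_ball.extremePoints_nonempty ⟨0, by simp [h.norm.map_zero]⟩).mono
    (extPts_subset_atoms h)

end Atoms

/-! ### Decomposability at an extreme point -/

section Structure
variable {B : Matrix (Fin n) (Fin n) ℝ} {N : (Fin n → ℝ) → ℝ}

/-- The orthogonal complement `perp B T` as a subspace. -/
def perpSub (B : Matrix (Fin n) (Fin n) ℝ) (T : Submodule ℝ (Fin n → ℝ)) :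
    Submodule ℝ (Fin n → ℝ) where
  carrier := perp B T
  add_mem' := by
    intro a b ha hb u hu
    rw [ip_add_right, ha u hu, hb u hu, add_zero]
  zero_mem' := fun u _ => ip_zero_right B u
  smul_mem' := by
    intro c a ha u hu
    rw [ip_smul_right, ha u hu, mul_zero]

lemma DualLe.zero (h : Good B N) : DualLe B N 0 := fun z => by
  rw [ip_zero_left]; exact h.norm.nonneg z

lemma DualLe.abs_le (h : Good B N) {y : Fin n → ℝ} (hy : DualLe B N y) (z : Fin n → ℝ) :
    |ip B y z| ≤ N z := by
  refine abs_le'.2 ⟨hy z, ?_⟩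
  rw [← ip_neg_left]
  exact hy.neg h z

lemma DualLe.ip_atom_le {y : Fin n → ℝ} (hy : DualLe B N y) {a : Fin n → ℝ}
    (ha : a ∈ atoms B N) : ip B y a ≤ 1 := (hy a).trans ha.1

lemma mem_subdiff_iff (h : Good B N) (x z : Fin n → ℝ) :
    z ∈ subdiff B N x ↔ DualLe B N z ∧ ip B z x = N x := by
  constructor
  · intro hz
    have h0 : N x + ip B z (0 - x) ≤ N 0 := hz 0
    have h2 : N x + ip B z ((2 : ℝ) • x - x) ≤ N ((2 : ℝ) • x) := hz _
    rw [h.norm.smul_nonneg zero_le_two, ip_sub_right, ip_smul_right] at h2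
    rw [h.norm.map_zero, ip_sub_right, ip_zero_right] at h0
    have he : ip B z x = N x := by linarith
    refine ⟨fun y => ?_, he⟩
    have hy : N x + ip B z (y - x) ≤ N y := hz y
    rw [ip_sub_right] at hy
    linarith
  · rintro ⟨hd, he⟩ y
    have := hd y
    rw [ip_sub_right]
    linarith

lemma subdiff_decomp (h : Good B N) (D : DecompStruct B N) (x ξ : Fin n → ℝ) :
    (DualLe B N ξ ∧ ip B ξ x = N x) ↔
      ∃ v ∈ perpSub B (D.T x), DualLe B N v ∧ ξ = D.e x + v := by
  rw [← mem_subdiff_iff h, D.subdiff_eq]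
  constructor
  · rintro ⟨v, hv, hd, he⟩
    exact ⟨v, hv, (dualNorm_le_one_iff h v).1 hd, he⟩
  · rintro ⟨v, hv, hd, he⟩
    exact ⟨v, hv, (dualNorm_le_one_iff h v).2 hd, he⟩

lemma ip_e_self (h : Good B N) (D : DecompStruct B N) (x : Fin n → ℝ) :
    ip B (D.e x) x = N x :=
  ((subdiff_decomp h D x (D.e x)).2 ⟨0, Submodule.zero_mem _, DualLe.zero h, by simp⟩).2

lemma dualLe_e (h : Good B N) (D : DecompStruct B N) (x : Fin n → ℝ) :
    DualLe B N (D.e x) :=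
  ((subdiff_decomp h D x (D.e x)).2 ⟨0, Submodule.zero_mem _, DualLe.zero h, by simp⟩).1

/-- An atom is its own subgradient, and it has the least Euclidean length among them. -/
lemma e_atom (h : Good B N) (D : DecompStruct B N) {a : Fin n → ℝ} (ha : a ∈ atoms B N) :
    D.e a = a := by
  obtain ⟨v, hv, -, hav⟩ := (subdiff_decomp h D a a).1
    ⟨dualLe_atom h ha, by rw [ha.2, N_atom h ha]⟩
  have hev : ip B (D.e a) v = 0 := hv _ (D.e_mem a)
  have h1 : ip B (D.e a) a = 1 := by rw [ip_e_self h D a, N_atom h ha]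
  have h2 : ip B (D.e a) (D.e a) = 1 := by
    have : ip B (D.e a) (D.e a + v) = 1 := by rw [← hav, h1]
    rwa [ip_add_right, hev, add_zero] at this
  have h3 : ip B (D.e a + v) (D.e a + v) = 1 := by rw [← hav, ha.2]
  have hv0 : v = 0 := by
    refine eq_zero_of_ip_self h.pos ?_
    simp only [ip_add_left, ip_add_right, ip_comm h.pos v, hev, h2] at h3
    linarith
  rw [hv0, add_zero] at hav
  exact hav.symm

lemma ip_atom_perp (h : Good B N) (D : DecompStruct B N) {a v : Fin n → ℝ}
    (ha : a ∈ atoms B N) (hv : v ∈ perpSub B (D.T a)) : ip B a v = 0 := by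
  have := hv _ (D.e_mem a)
  rwa [e_atom h D ha] at this

lemma dualLe_atom_add (h : Good B N) (D : DecompStruct B N) {a v : Fin n → ℝ}
    (ha : a ∈ atoms B N) (hv : v ∈ perpSub B (D.T a)) (hd : DualLe B N v) :
    DualLe B N (a + v) :=
  ((subdiff_decomp h D a (a + v)).2 ⟨v, hv, hd, by rw [e_atom h D ha]⟩).1

lemma sub_atom_mem (h : Good B N) (D : DecompStruct B N) {a ξ : Fin n → ℝ}
    (ha : a ∈ atoms B N) (hd : DualLe B N ξ) (h1 : ip B ξ a = 1) :
    ξ - a ∈ perpSub B (D.T a) := by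
  obtain ⟨v, hv, -, hav⟩ := (subdiff_decomp h D a ξ).1 ⟨hd, by rw [h1, N_atom h ha]⟩
  rw [e_atom h D ha] at hav
  rwa [hav, add_sub_cancel_left]

/-- The atom `a` has the largest inner product with `x` among all atoms. -/
def IsTop (B : Matrix (Fin n) (Fin n) ℝ) (N : (Fin n → ℝ) → ℝ) (x a : Fin n → ℝ) : Prop :=
  a ∈ atoms B N ∧ ∀ b ∈ atoms B N, ip B x b ≤ ip B x a

lemma exists_isTop (h : Good B N) (x : Fin n → ℝ) : ∃ a, IsTop B N x a := by
  obtain ⟨a, ha, hmax⟩ := (isCompact_atoms h).exists_isMaxOn (atoms_nonempty h)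
    ((continuous_ip B).comp ((continuous_const (y := x)).prodMk continuous_id)).continuousOn
  exact ⟨a, ha, fun b hb => hmax hb⟩

lemma IsTop.pos (h : Good B N) {x a : Fin n → ℝ} (hx : x ≠ 0) (ha : IsTop B N x a) :
    0 < ip B x a := by
  have h1 := ip_le_of_atoms h ha.2 x
  have h2 : 0 < ip B x x := by
    by_contra hle
    exact hx (eq_zero_of_ip_self h.pos (not_lt.1 hle))
  have h3 := h.norm.nonneg x
  by_contra hle
  nlinarith

/-- If the functional of `x` is maximized over the atoms at `a`, then after normalizing its value
there to `1` it becomes a subgradient of the norm at `a`. -/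
lemma sub_smul_mem (h : Good B N) (D : DecompStruct B N) {x a : Fin n → ℝ} (ha : IsTop B N x a)
    (hpos : 0 < ip B x a) :
    DualLe B N ((ip B x a)⁻¹ • x) ∧ (ip B x a)⁻¹ • x - a ∈ perpSub B (D.T a) := by
  have hd : DualLe B N ((ip B x a)⁻¹ • x) := by
    intro z
    rw [ip_smul_left, inv_mul_le_iff₀ hpos]
    exact ip_le_of_atoms h ha.2 z
  exact ⟨hd, sub_atom_mem h D ha.1 hd (by rw [ip_smul_left, inv_mul_cancel₀ hpos.ne'])⟩

lemma IsTop.sub_mem (h : Good B N) (D : DecompStruct B N) {x a : Fin n → ℝ}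
    (ha : IsTop B N x a) (hpos : 0 < ip B x a) :
    x - ip B x a • a ∈ perpSub B (D.T a) := by
  have := (perpSub B (D.T a)).smul_mem (ip B x a) (sub_smul_mem h D ha hpos).2
  rwa [smul_sub, smul_smul, mul_inv_cancel₀ hpos.ne', one_smul] at this

/-- The complement at an atom is hereditary: it contains every top atom of each of its nonzero
elements. -/
lemma IsTop.mem_perp (h : Good B N) (D : DecompStruct B N) {c x a : Fin n → ℝ}
    (hc : c ∈ atoms B N) (hx : x ∈ perpSub B (D.T c)) (hx0 : x ≠ 0) (ha : IsTop B N x a) :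
    a ∈ perpSub B (D.T c) := by
  have hpos := ha.pos h hx0
  obtain ⟨hd, hw⟩ := sub_smul_mem h D ha hpos
  set w := (ip B x a)⁻¹ • x with hwdef
  have hwc : w ∈ perpSub B (D.T c) := Submodule.smul_mem _ _ hx
  have hwa : ip B w a = 1 := by rw [hwdef, ip_smul_left, inv_mul_cancel₀ hpos.ne']
  have hcw := dualLe_atom_add h D hc hwc hd
  -- both `c + w` and `-c + w` lie in the dual ball, which forces `a` to be orthogonal to `c`
  have hcw' : DualLe B N (-(c + -w)) :=
    (dualLe_atom_add h D hc (Submodule.neg_mem _ hwc) (hd.neg h)).neg h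
  have e1 := hcw.ip_atom_le ha.1
  have e2 := hcw'.ip_atom_le ha.1
  rw [ip_add_left, hwa] at e1
  rw [ip_neg_left, ip_add_left, ip_neg_left, hwa] at e2
  have hca : ip B c a = 0 := by linarith
  have h1 := sub_atom_mem h D ha.1 hcw (by rw [ip_add_left, hwa, hca, zero_add])
  have hcmem : c ∈ perpSub B (D.T a) := by
    have := Submodule.sub_mem _ h1 hw
    rwa [show c + w - a - (w - a) = c by abel] at this
  have h2 := dualLe_atom_add h D ha.1 hcmem (dualLe_atom h hc)
  have h3 := sub_atom_mem h D hc h2 (by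
    rw [ip_add_left, ip_comm h.pos a c, hca, hc.2, zero_add])
  rwa [add_sub_cancel_right] at h3

end Structure

/-! ### Frames and decompositions along frames -/

section Frames
variable {B : Matrix (Fin n) (Fin n) ℝ} {N : (Fin n → ℝ) → ℝ}

/-- A frame: finitely many atoms all of whose combinations with coefficients in `[-1, 1]` lie in
the dual unit ball. -/
structure IsFrame (B : Matrix (Fin n) (Fin n) ℝ) (N : (Fin n → ℝ) → ℝ) {k : ℕ}
    (c : Fin k → Fin n → ℝ) : Prop where
  atom : ∀ j, c j ∈ atoms B N
  sum_le : ∀ y, ∑ j, |ip B (c j) y| ≤ N y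

lemma IsFrame.sum_atom_le {k : ℕ} {c : Fin k → Fin n → ℝ} (hc : IsFrame B N c)
    {a : Fin n → ℝ} (ha : a ∈ atoms B N) : ∑ j, |ip B (c j) a| ≤ 1 :=
  (hc.sum_le a).trans ha.1

lemma IsFrame.dualLe {k : ℕ} {c : Fin k → Fin n → ℝ} (hc : IsFrame B N c) {s : Fin k → ℝ}
    (hs : ∀ j, |s j| ≤ 1) : DualLe B N (∑ j, s j • c j) := by
  intro z
  rw [ip_sum_left]
  refine le_trans (Finset.sum_le_sum fun j _ => ?_) (hc.sum_le z)
  rw [ip_smul_left]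
  refine (le_abs_self _).trans ?_
  rw [abs_mul]
  exact mul_le_of_le_one_left (abs_nonneg _) (hs j)

lemma IsFrame.ip_eq {k : ℕ} {c : Fin k → Fin n → ℝ} (hc : IsFrame B N c) (i j : Fin k) :
    ip B (c i) (c j) = if i = j then 1 else 0 := by
  split_ifs with hij
  · rw [hij]; exact (hc.atom j).2
  · have h1 := hc.sum_atom_le (hc.atom j)
    have h2 : ∑ l ∈ ({i, j} : Finset (Fin k)), |ip B (c l) (c j)| ≤ ∑ l, |ip B (c l) (c j)| :=
      Finset.sum_le_sum_of_subset_of_nonneg (Finset.subset_univ _) fun _ _ _ => abs_nonneg _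
    rw [Finset.sum_pair hij, (hc.atom j).2, abs_one] at h2
    have h3 : |ip B (c i) (c j)| ≤ 0 := by linarith
    exact abs_nonpos_iff.1 h3

lemma IsFrame.ip_sum {k : ℕ} {c : Fin k → Fin n → ℝ} (hc : IsFrame B N c) (s : Fin k → ℝ)
    (j : Fin k) : ip B (∑ i, s i • c i) (c j) = s j := by
  simp [ip_sum_left, ip_smul_left, hc.ip_eq]

lemma IsFrame.ip_sum_self {k : ℕ} {c : Fin k → Fin n → ℝ} (hc : IsFrame B N c)
    (s t : Fin k → ℝ) : ip B (∑ i, s i • c i) (∑ i, t i • c i) = ∑ i, s i * t i := by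
  simp only [ip_sum_right, ip_smul_right, hc.ip_sum]
  exact Finset.sum_congr rfl fun i _ => mul_comm _ _

lemma IsFrame.card_le {k : ℕ} {c : Fin k → Fin n → ℝ} (hc : IsFrame B N c) : k ≤ n := by
  have hli : LinearIndependent ℝ c := by
    rw [Fintype.linearIndependent_iff]
    intro g hg i
    rw [← hc.ip_sum g i, hg, ip_zero_left]
  simpa using hli.fintype_card_le_finrank

lemma IsFrame.cons (h : Good B N) (D : DecompStruct B N) {k : ℕ} {b : Fin n → ℝ}
    {d : Fin k → Fin n → ℝ} (hb : b ∈ atoms B N) (hd : IsFrame B N d)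
    (hp : ∀ j, d j ∈ perpSub B (D.T b)) :
    IsFrame B N (Fin.cons b d : Fin (k + 1) → Fin n → ℝ) := by
  refine ⟨fun j => ?_, fun y => ?_⟩
  · refine Fin.cases ?_ (fun i => ?_) j
    · simpa using hb
    · simpa using hd.atom i
  · rw [Fin.sum_univ_succ]
    simp only [Fin.cons_zero, Fin.cons_succ]
    set s : Fin k → ℝ := fun j => SignType.sign (ip B (d j) y) with hs
    set v := ∑ j, s j • d j with hv
    have hs1 : ∀ j, |s j| ≤ 1 := by
      intro j
      rcases lt_trichotomy (ip B (d j) y) 0 with hlt | heq | hgt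
      · simp [hs, hlt]
      · simp [hs, heq]
      · simp [hs, hgt]
    have hvd : DualLe B N v := hd.dualLe hs1
    have hvp : v ∈ perpSub B (D.T b) :=
      Submodule.sum_mem _ fun j _ => Submodule.smul_mem _ _ (hp j)
    have hvy : ip B v y = ∑ j, |ip B (d j) y| := by
      rw [hv, ip_sum_left]
      refine Finset.sum_congr rfl fun j _ => ?_
      rw [ip_smul_left, hs]
      exact sign_mul_self _
    rw [← hvy]
    rcases le_total 0 (ip B b y) with h0 | h0
    · rw [abs_of_nonneg h0, ← ip_add_left]
      exact dualLe_atom_add h D hb hvp hvd y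
    · rw [abs_of_nonpos h0]
      have := (dualLe_atom_add h D hb (Submodule.neg_mem _ hvp) (hvd.neg h)).neg h y
      rw [ip_neg_left, ip_add_left, ip_neg_left] at this
      linarith

/-- Peeling off top atoms one at a time decomposes a vector along a frame. The complements being
hereditary, the atoms met later stay in the complements of the earlier ones. -/
lemma exists_decomp_of_hereditary (h : Good B N) (D : DecompStruct B N) (r : ℕ) :
    ∀ S : Submodule ℝ (Fin n → ℝ), Module.finrank ℝ S < r →
    (∀ y ∈ S, y ≠ 0 → ∀ a, IsTop B N y a → a ∈ S) → ∀ x ∈ S,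
    ∃ (k : ℕ) (c : Fin k → Fin n → ℝ) (μ : Fin k → ℝ), IsFrame B N c ∧ (∀ j, c j ∈ S) ∧
      (∀ j, 0 < μ j) ∧ x = ∑ j, μ j • c j := by
  induction r with
  | zero => intro S hS; exact absurd hS (Nat.not_lt_zero _)
  | succ r ih =>
    intro S hS hher x hx
    by_cases hx0 : x = 0
    · refine ⟨0, fun j => j.elim0, fun j => j.elim0, ⟨fun j => j.elim0, fun y => ?_⟩,
        fun j => j.elim0, fun j => j.elim0, by simpa using hx0⟩
      simpa using h.norm.nonneg y
    obtain ⟨a, ha⟩ := exists_isTop h x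
    have hpos := ha.pos h hx0
    have haS := hher x hx hx0 a ha
    have hlt : S ⊓ perpSub B (D.T a) < S := by
      refine lt_of_le_of_ne inf_le_left fun heq => ?_
      have h1 : a ∈ S ⊓ perpSub B (D.T a) := heq.ge haS
      have h2 := ip_atom_perp h D ha.1 h1.2
      rw [ha.1.2] at h2
      exact one_ne_zero h2
    have hfr := Submodule.finrank_lt_finrank_of_lt hlt
    obtain ⟨k, c, μ, hc, hcS, hμ, hsum⟩ := ih (S ⊓ perpSub B (D.T a)) (by omega)
      (fun y hy hy0 b hb => ⟨hher y hy.1 hy0 b hb, hb.mem_perp h D ha.1 hy.2 hy0⟩)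
      (x - ip B x a • a)
      ⟨Submodule.sub_mem _ hx (Submodule.smul_mem _ _ haS), ha.sub_mem h D hpos⟩
    refine ⟨k + 1, Fin.cons a c, Fin.cons (ip B x a) μ,
      hc.cons h D ha.1 fun j => (hcS j).2, fun j => ?_, fun j => ?_, ?_⟩
    · refine Fin.cases ?_ (fun i => ?_) j
      · simpa using haS
      · simpa using (hcS i).1
    · refine Fin.cases ?_ (fun i => ?_) j
      · simpa using hpos
      · simpa using hμ i
    · rw [Fin.sum_univ_succ]
      simp only [Fin.cons_zero, Fin.cons_succ]
      rw [← hsum]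
      abel

lemma exists_decomp (h : Good B N) (D : DecompStruct B N) (x : Fin n → ℝ) :
    ∃ (k : ℕ) (c : Fin k → Fin n → ℝ) (μ : Fin k → ℝ), IsFrame B N c ∧
      (∀ j, 0 < μ j) ∧ x = ∑ j, μ j • c j := by
  obtain ⟨k, c, μ, hc, -, hμ, hx⟩ := exists_decomp_of_hereditary h D _ ⊤ (Nat.lt_succ_self _)
    (fun _ _ _ _ _ => Submodule.mem_top) x Submodule.mem_top
  exact ⟨k, c, μ, hc, hμ, hx⟩

lemma exists_decomp_perp (h : Good B N) (D : DecompStruct B N) {b v : Fin n → ℝ}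
    (hb : b ∈ atoms B N) (hv : v ∈ perpSub B (D.T b)) :
    ∃ (k : ℕ) (d : Fin k → Fin n → ℝ) (ν : Fin k → ℝ),
      IsFrame B N (Fin.cons b d : Fin (k + 1) → Fin n → ℝ) ∧ v = ∑ j, ν j • d j := by
  obtain ⟨k, d, ν, hd, hdp, -, hx⟩ := exists_decomp_of_hereditary h D _ (perpSub B (D.T b))
    (Nat.lt_succ_self _) (fun y hy hy0 a ha => ha.mem_perp h D hb hy hy0) v hv
  exact ⟨k, d, ν, hd.cons h D hb hdp, hx⟩

/-- The subgradient `∑ c j` of `x` and its part `e x` have the same inner product with each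
`c j`, since `e x` lies in the dual ball and attains `N x = ∑ μ j` on `x`. -/
lemma Kfun_eq_card (h : Good B N) (D : DecompStruct B N) {x : Fin n → ℝ} {k : ℕ}
    {c : Fin k → Fin n → ℝ} {μ : Fin k → ℝ} (hc : IsFrame B N c) (hμ : ∀ j, 0 < μ j)
    (hx : x = ∑ j, μ j • c j) : Kfun B N D x = k := by
  have hs : DualLe B N (∑ j, (1 : ℝ) • c j) := hc.dualLe fun j => by simp
  have hsx : ip B (∑ j, (1 : ℝ) • c j) x = ∑ j, μ j := by
    rw [hx, hc.ip_sum_self]; simp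
  have hNle : N x ≤ ∑ j, μ j := by
    rw [hx]
    refine (h.norm.sum_le _ _).trans (Finset.sum_le_sum fun j _ => ?_)
    rw [h.norm.smul_nonneg (hμ j).le, N_atom h (hc.atom j), mul_one]
  have hNx : N x = ∑ j, μ j := le_antisymm hNle (hsx ▸ hs x)
  obtain ⟨v, hv, -, hev⟩ := (subdiff_decomp h D x _).1 ⟨hs, hsx.trans hNx.symm⟩
  have hec : ∀ j, ip B (D.e x) (c j) = 1 := by
    have h1 : ∑ j, μ j * (1 - ip B (D.e x) (c j)) = 0 := by
      have h2 := ip_e_self h D x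
      rw [hNx] at h2
      have h3 : ip B (D.e x) x = ∑ j, μ j * ip B (D.e x) (c j) :=
        (congrArg (ip B (D.e x)) hx).trans (by simp only [ip_sum_right, ip_smul_right])
      simp only [mul_sub, mul_one, Finset.sum_sub_distrib]
      linarith
    intro j
    have h4 := (Finset.sum_eq_zero_iff_of_nonneg fun i _ => mul_nonneg (hμ i).le
      (sub_nonneg.2 ((dualLe_e h D x).ip_atom_le (hc.atom i)))).1 h1 j (Finset.mem_univ j)
    rcases mul_eq_zero.1 h4 with h5 | h5
    · exact absurd h5 (hμ j).ne'
    · linarith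
  have h6 : ip B (D.e x) (D.e x) = ip B (D.e x) (∑ j, (1 : ℝ) • c j) := by
    rw [hev, ip_add_right, hv _ (D.e_mem x), add_zero]
  rw [Kfun, normu_sq h.pos, h6, ip_sum_right]
  simp [hec]

end Frames

/-! ### Pairings of frames and the spectral surrogate -/

section Pairing
variable {B : Matrix (Fin n) (Fin n) ℝ} {N : (Fin n → ℝ) → ℝ}

lemma pairing_le {k l : ℕ} (M : Fin k → Fin l → ℝ) (hr : ∀ i, ∑ j, |M i j| ≤ 1)
    (hc : ∀ j, ∑ i, |M i j| ≤ 1) (P : Fin k → ℝ) (Q : Fin l → ℝ) (X : Fin k → Fin l → ℝ)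
    (hP : ∀ i, P i ≤ 0) (hQ : ∀ j, 0 ≤ Q j) (hX : ∀ i j, 0 ≤ X i j)
    (hXle : ∀ i j, X i j ≤ Q j - P i) :
    ∑ i, P i + ∑ i, ∑ j, M i j * X i j ≤ ∑ j, Q j := by
  have h1 : ∑ i, ∑ j, M i j * X i j ≤ ∑ i, ∑ j, (|M i j| * Q j - |M i j| * P i) := by
    refine Finset.sum_le_sum fun i _ => Finset.sum_le_sum fun j _ => ?_
    rw [← mul_sub]
    exact (mul_le_mul_of_nonneg_right (le_abs_self _) (hX i j)).trans
      (mul_le_mul_of_nonneg_left (hXle i j) (abs_nonneg _))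
  have h2 : ∑ i, ∑ j, (|M i j| * Q j - |M i j| * P i) =
      ∑ j, (∑ i, |M i j|) * Q j - ∑ i, (∑ j, |M i j|) * P i := by
    simp only [Finset.sum_sub_distrib, Finset.sum_mul]
    rw [Finset.sum_comm]
  have h3 : ∑ j, (∑ i, |M i j|) * Q j ≤ ∑ j, Q j :=
    Finset.sum_le_sum fun j _ => mul_le_of_le_one_left (hQ j) (hc j)
  have h4 : ∑ i, P i ≤ ∑ i, (∑ j, |M i j|) * P i :=
    Finset.sum_le_sum fun i _ => by nlinarith [hP i, hr i]
  linarith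

lemma IsFrame.row_le (h : Good B N) {k l : ℕ} {c : Fin k → Fin n → ℝ} {d : Fin l → Fin n → ℝ}
    (hc : IsFrame B N c) (hd : IsFrame B N d) (i : Fin k) : ∑ j, |ip B (c i) (d j)| ≤ 1 := by
  simpa only [ip_comm h.pos (c i)] using hd.sum_atom_le (hc.atom i)

lemma ip_sum_sum {k l : ℕ} (c : Fin k → Fin n → ℝ) (d : Fin l → Fin n → ℝ) (s : Fin k → ℝ)
    (t : Fin l → ℝ) : ip B (∑ i, s i • c i) (∑ j, t j • d j) =
      ∑ i, ∑ j, ip B (c i) (d j) * (s i * t j) := by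
  rw [ip_sum_left]
  refine Finset.sum_congr rfl fun i _ => ?_
  rw [ip_sum_right]
  refine Finset.sum_congr rfl fun j _ => ?_
  rw [ip_smul_left, ip_smul_right]
  ring

/-- Two frame expansions of one vector have matching coefficients wherever the frames are not
orthogonal. The reason is that `∑ μ² + ∑ ν² - 2 ∑ ⟪c i, d j⟫ μ i ν j = 0` dominates a sum of
nonnegative terms `|⟪c i, d j⟫| (μ i ∓ ν j)²`. -/
lemma coeff_eq (h : Good B N) {k l : ℕ} {c : Fin k → Fin n → ℝ} {d : Fin l → Fin n → ℝ}
    (hc : IsFrame B N c) (hd : IsFrame B N d) {μ : Fin k → ℝ} {ν : Fin l → ℝ}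
    (heq : ∑ i, μ i • c i = ∑ j, ν j • d j) (i : Fin k) (j : Fin l) :
    (0 < ip B (c i) (d j) → μ i = ν j) ∧ (ip B (c i) (d j) < 0 → μ i = -ν j) := by
  set M : Fin k → Fin l → ℝ := fun i j => ip B (c i) (d j) with hM
  have hcc := hc.ip_sum_self μ μ
  have hdd := hd.ip_sum_self ν ν
  have hcd := ip_sum_sum (B := B) c d μ ν
  rw [← heq] at hdd hcd
  set t : Fin k → Fin l → ℝ :=
    fun i j => |M i j| * (μ i * μ i) + |M i j| * (ν j * ν j) - 2 * (M i j * (μ i * ν j)) with ht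
  have ht0 : ∀ i j, 0 ≤ t i j := by
    intro i j
    rcases abs_cases (M i j) with ⟨h1, h2⟩ | ⟨h1, h2⟩
    · simp only [ht, h1]; nlinarith [mul_nonneg h2 (sq_nonneg (μ i - ν j))]
    · simp only [ht, h1]; nlinarith [mul_nonneg (neg_nonneg.2 h2.le) (sq_nonneg (μ i + ν j))]
  have hsum : ∑ i, ∑ j, t i j = ∑ i, (∑ j, |M i j|) * (μ i * μ i) +
      ∑ j, (∑ i, |M i j|) * (ν j * ν j) - 2 * ∑ i, ∑ j, M i j * (μ i * ν j) := by
    simp only [ht, Finset.sum_sub_distrib, Finset.sum_add_distrib, Finset.sum_mul, Finset.mul_sum]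
    congr 2
    rw [Finset.sum_comm]
  have h1 : ∑ i, (∑ j, |M i j|) * (μ i * μ i) ≤ ∑ i, μ i * μ i :=
    Finset.sum_le_sum fun i _ =>
      mul_le_of_le_one_left (mul_self_nonneg _) (hc.row_le h hd i)
  have h2 : ∑ j, (∑ i, |M i j|) * (ν j * ν j) ≤ ∑ j, ν j * ν j :=
    Finset.sum_le_sum fun j _ =>
      mul_le_of_le_one_left (mul_self_nonneg _) (hc.sum_atom_le (hd.atom j))
  have h3 : ∑ i, ∑ j, t i j ≤ 0 := by
    rw [hsum]
    linarith
  have h4 : t i j ≤ 0 := by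
    have e1 : t i j ≤ ∑ j, t i j :=
      Finset.single_le_sum (f := fun j => t i j) (fun j _ => ht0 i j) (Finset.mem_univ j)
    have e2 : ∑ j, t i j ≤ ∑ i, ∑ j, t i j :=
      Finset.single_le_sum (f := fun i => ∑ j, t i j)
        (fun i _ => Finset.sum_nonneg fun j _ => ht0 i j) (Finset.mem_univ i)
    linarith
  have h5 : |M i j| * (μ i * μ i) + |M i j| * (ν j * ν j) - 2 * (M i j * (μ i * ν j)) ≤ 0 := h4
  constructor
  · intro hpos
    rw [abs_of_pos hpos] at h5
    have h6 : M i j * (μ i - ν j) ^ 2 ≤ 0 := by linarith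
    have h7 : (μ i - ν j) ^ 2 ≤ 0 := nonpos_of_mul_nonpos_right h6 hpos
    exact sub_eq_zero.1 (pow_eq_zero_iff two_ne_zero |>.1 (le_antisymm h7 (sq_nonneg _)))
  · intro hneg
    rw [abs_of_neg hneg] at h5
    have h6 : -M i j * (μ i + ν j) ^ 2 ≤ 0 := by linarith
    have h7 : (μ i + ν j) ^ 2 ≤ 0 := nonpos_of_mul_nonpos_right h6 (neg_pos.2 hneg)
    have h8 := pow_eq_zero_iff two_ne_zero |>.1 (le_antisymm h7 (sq_nonneg _))
    linarith

end Pairing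

section Surrogate
variable {B : Matrix (Fin n) (Fin n) ℝ} {N : (Fin n → ℝ) → ℝ}

/-- A bounded concave surrogate for counting positive coefficients. -/
noncomputable def w (t : ℝ) : ℝ := t / (1 + t)

/-- The derivative of `w`. -/
noncomputable def dw (t : ℝ) : ℝ := 1 / (1 + t) ^ 2

lemma w_nonneg {t : ℝ} (ht : 0 ≤ t) : 0 ≤ w t := by unfold w; positivity

lemma w_le_one {t : ℝ} (ht : 0 ≤ t) : w t ≤ 1 := by
  unfold w
  rw [div_le_one (by linarith)]
  linarith

lemma dw_pos {t : ℝ} (ht : 0 ≤ t) : 0 < dw t := by unfold dw; positivity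

lemma dw_le_one {t : ℝ} (ht : 0 ≤ t) : dw t ≤ 1 := by
  unfold dw
  rw [div_le_one (by positivity)]
  nlinarith

lemma dw_injective {s t : ℝ} (hs : 0 ≤ s) (ht : 0 ≤ t) (h : dw s = dw t) : s = t := by
  unfold dw at h
  rw [div_eq_div_iff (by positivity) (by positivity)] at h
  nlinarith

lemma w_tangent {s t : ℝ} (hs : 0 ≤ s) (ht : 0 ≤ t) :
    w s + dw s * (t - s) - (t - s) ^ 2 ≤ w t := by
  have h1 : w t - w s - dw s * (t - s) = -((t - s) ^ 2 * (1 / ((1 + t) * (1 + s) ^ 2))) := by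
    unfold w dw
    have : 1 + t ≠ 0 := by positivity
    have : 1 + s ≠ 0 := by positivity
    field_simp
    ring
  have h2 : 1 / ((1 + t) * (1 + s) ^ 2) ≤ 1 := by
    rw [div_le_one (by positivity)]
    exact one_le_mul_of_one_le_of_one_le (by linarith) (one_le_pow₀ (by linarith))
  have h3 := mul_le_of_le_one_right (sq_nonneg (t - s)) h2
  linarith

/-- The spectral function `∑ w (μ j)` has a quadratic lower model with gradient
`∑ dw (μ i) c i`. -/
lemma sum_w_tangent (h : Good B N) {k l : ℕ} {c : Fin k → Fin n → ℝ} {d : Fin l → Fin n → ℝ}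
    (hc : IsFrame B N c) (hd : IsFrame B N d) {μ : Fin k → ℝ} {ν : Fin l → ℝ}
    (hμ : ∀ i, 0 ≤ μ i) (hν : ∀ j, 0 ≤ ν j) {x y : Fin n → ℝ}
    (hx : x = ∑ i, μ i • c i) (hy : y = ∑ j, ν j • d j) :
    ∑ i, w (μ i) + ip B (∑ i, dw (μ i) • c i) (y - x) - ip B (y - x) (y - x) ≤
      ∑ j, w (ν j) := by
  have key := pairing_le (fun i j => ip B (c i) (d j)) (hc.row_le h hd)
    (fun j => hc.sum_atom_le (hd.atom j))
    (fun i => w (μ i) - dw (μ i) * μ i - μ i * μ i) (fun j => w (ν j) + ν j * ν j)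
    (fun i j => dw (μ i) * ν j + 2 * (μ i * ν j)) ?_ ?_ ?_ ?_
  · have e1 : ip B x x = ∑ i, μ i * μ i := by rw [hx, hc.ip_sum_self]
    have e2 : ip B y y = ∑ j, ν j * ν j := by rw [hy, hd.ip_sum_self]
    have e3 : ip B x y = ∑ i, ∑ j, ip B (c i) (d j) * (μ i * ν j) := by
      rw [hx, hy, ip_sum_sum]
    have e4 : ip B (∑ i, dw (μ i) • c i) x = ∑ i, dw (μ i) * μ i := by
      rw [hx, hc.ip_sum_self]
    have e5 : ip B (∑ i, dw (μ i) • c i) y =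
        ∑ i, ∑ j, ip B (c i) (d j) * (dw (μ i) * ν j) := by
      rw [hy, ip_sum_sum]
    have e6 : ∑ i, ∑ j, ip B (c i) (d j) * (dw (μ i) * ν j + 2 * (μ i * ν j)) =
        ip B (∑ i, dw (μ i) • c i) y + 2 * ip B x y := by
      rw [e5, e3]
      simp only [Finset.mul_sum, ← Finset.sum_add_distrib]
      refine Finset.sum_congr rfl fun i _ => Finset.sum_congr rfl fun j _ => ?_
      ring
    simp only [e6, Finset.sum_sub_distrib, Finset.sum_add_distrib] at key
    simp only [ip_sub_left _ y x, ip_sub_right, ip_comm h.pos y x]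
    linarith
  · intro i
    have := w_tangent (hμ i) le_rfl
    simp only [w, zero_div, zero_sub] at this ⊢
    nlinarith
  · intro j
    have := w_nonneg (hν j)
    have := mul_self_nonneg (ν j)
    linarith
  · intro i j
    have := (dw_pos (hμ i)).le
    have := hμ i
    have := hν j
    positivity
  · intro i j
    have := w_tangent (hμ i) (hν j)
    nlinarith

/-- `F` takes the value `∑ w (μ j)` on `∑ μ j • c j`, for every frame `c` and nonnegative `μ`. -/
def IsSpectral (B : Matrix (Fin n) (Fin n) ℝ) (N : (Fin n → ℝ) → ℝ)
    (F : (Fin n → ℝ) → ℝ) : Prop :=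
  ∀ (k : ℕ) (c : Fin k → Fin n → ℝ) (μ : Fin k → ℝ), IsFrame B N c → (∀ j, 0 ≤ μ j) →
    F (∑ j, μ j • c j) = ∑ j, w (μ j)

lemma exists_isSpectral (h : Good B N) (D : DecompStruct B N) : ∃ F, IsSpectral B N F := by
  choose k c μ hc hμ hx using exists_decomp h D
  refine ⟨fun x => ∑ j, w (μ x j), fun l d ν hd hν => ?_⟩
  have h1 := sum_w_tangent h (hc (∑ j, ν j • d j)) hd (fun i => (hμ _ i).le) hν (hx _) rfl
  have h2 := sum_w_tangent h hd (hc (∑ j, ν j • d j)) hν (fun i => (hμ _ i).le) rfl (hx _)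
  rw [sub_self, ip_zero_right, ip_zero_right] at h1 h2
  exact le_antisymm (by linarith) (by linarith)

variable {F : (Fin n → ℝ) → ℝ}

lemma IsSpectral.tangent (hF : IsSpectral B N F) (h : Good B N) (D : DecompStruct B N) {k : ℕ}
    {c : Fin k → Fin n → ℝ} {μ : Fin k → ℝ} (hc : IsFrame B N c) (hμ : ∀ j, 0 ≤ μ j)
    {x : Fin n → ℝ} (hx : x = ∑ j, μ j • c j) (y : Fin n → ℝ) :
    F x + ip B (∑ i, dw (μ i) • c i) (y - x) - ip B (y - x) (y - x) ≤ F y := by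
  obtain ⟨l, d, ν, hd, hν, hy⟩ := exists_decomp h D y
  have := sum_w_tangent h hc hd hμ (fun j => (hν j).le) hx hy
  rwa [← hF _ _ _ hc hμ, ← hF _ _ _ hd fun j => (hν j).le, ← hx, ← hy] at this

lemma IsSpectral.le_card (hF : IsSpectral B N F) {k : ℕ}
    {c : Fin k → Fin n → ℝ} {μ : Fin k → ℝ} (hc : IsFrame B N c) (hμ : ∀ j, 0 ≤ μ j)
    {x : Fin n → ℝ} (hx : x = ∑ j, μ j • c j) : F x ≤ k := by
  rw [hx, hF _ _ _ hc hμ]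
  refine (Finset.sum_le_sum fun j _ => w_le_one (hμ j)).trans ?_
  simp

lemma IsSpectral.le_dim (hF : IsSpectral B N F) (h : Good B N) (D : DecompStruct B N)
    (x : Fin n → ℝ) : F x ≤ n := by
  obtain ⟨k, c, μ, hc, hμ, hx⟩ := exists_decomp h D x
  refine (hF.le_card hc (fun j => (hμ j).le) hx).trans ?_
  exact_mod_cast hc.card_le

lemma IsSpectral.sub_le (hF : IsSpectral B N F) (h : Good B N) (D : DecompStruct B N)
    (x y : Fin n → ℝ) : F x - F y ≤ N (y - x) + N (y - x) ^ 2 := by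
  obtain ⟨k, c, μ, hc, hμ, hx⟩ := exists_decomp h D x
  have h1 := hF.tangent h D hc (fun j => (hμ j).le) hx y
  have hg : DualLe B N (∑ i, dw (μ i) • c i) := hc.dualLe fun j => by
    rw [abs_of_pos (dw_pos (hμ j).le)]
    exact dw_le_one (hμ j).le
  have h2 := (abs_le.1 (hg.abs_le h (y - x))).1
  have h3 := ip_self_le h (y - x)
  linarith

lemma IsSpectral.continuous (hF : IsSpectral B N F) (h : Good B N) (D : DecompStruct B N) :
    Continuous F := by
  rw [continuous_iff_continuousAt]
  intro x
  rw [ContinuousAt, tendsto_iff_dist_tendsto_zero]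
  have hlim : Filter.Tendsto (fun y => N (y - x) + N (y - x) ^ 2) (nhds x) (nhds 0) := by
    have hcont : Continuous fun y => N (y - x) + N (y - x) ^ 2 := by
      have := h.norm.continuous.comp (continuous_id.sub (continuous_const (y := x)))
      exact this.add (this.pow 2)
    have := hcont.tendsto x
    simpa [h.norm.map_zero] using this
  refine squeeze_zero (fun _ => dist_nonneg) (fun y => ?_) hlim
  rw [Real.dist_eq, abs_le']
  have h1 := hF.sub_le h D x y
  have h2 := hF.sub_le h D y x
  rw [← h.norm.map_neg (x - y), neg_sub] at h2
  exact ⟨h2, by linarith⟩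

end Surrogate

/-! ### The lower bound on the number of extreme points -/

section LowerBound
variable {B : Matrix (Fin n) (Fin n) ℝ} {N : (Fin n → ℝ) → ℝ} {F : (Fin n → ℝ) → ℝ}

/-- The penalized surrogate of a combination `∑ α i • b i`. -/
noncomputable def pen (F : (Fin n → ℝ) → ℝ) (ε : ℝ) {l : ℕ} (α : Fin l → ℝ)
    (b : Fin l → Fin n → ℝ) : ℝ := F (∑ i, α i • b i) - ε * ∑ i, α i ^ 2

lemma exists_pen_max (h : Good B N) (D : DecompStruct B N) (hF : IsSpectral B N F) {ε : ℝ}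
    (hε : 0 < ε) {l : ℕ} {α₀ : Fin l → ℝ} {b₀ : Fin l → Fin n → ℝ}
    (hb₀ : ∀ i, b₀ i ∈ atoms B N) (h0 : 0 < pen F ε α₀ b₀) :
    ∃ (α : Fin l → ℝ) (b : Fin l → Fin n → ℝ), (∀ i, b i ∈ atoms B N) ∧
      ∀ (α' : Fin l → ℝ) (b' : Fin l → Fin n → ℝ), (∀ i, b' i ∈ atoms B N) →
        pen F ε α' b' ≤ pen F ε α b := by
  set R : ℝ := n / ε with hR
  have hR0 : 0 ≤ R := by positivity
  have hcompact : IsCompact {α : Fin l → ℝ | ∑ i, α i ^ 2 ≤ R} := by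
    refine Metric.isCompact_of_isClosed_isBounded
      (isClosed_le (by fun_prop) continuous_const) ?_
    refine (Metric.isBounded_iff_subset_closedBall 0).2 ⟨R + 1, fun α hα => ?_⟩
    rw [mem_closedBall_zero_iff, pi_norm_le_iff_of_nonneg (by linarith)]
    intro i
    have h1 : α i ^ 2 ≤ ∑ i, α i ^ 2 :=
      Finset.single_le_sum (f := fun i => α i ^ 2) (fun i _ => sq_nonneg _) (Finset.mem_univ i)
    have h2 : ∑ i, α i ^ 2 ≤ R := hα
    rw [Real.norm_eq_abs]
    exact abs_le_of_sq_le_sq (by nlinarith) (by linarith)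
  have hout : ∀ (α : Fin l → ℝ) (b : Fin l → Fin n → ℝ), ¬ ∑ i, α i ^ 2 ≤ R →
      pen F ε α b ≤ 0 := by
    intro α b hα
    have h1 := hF.le_dim h D (∑ i, α i • b i)
    have h2 : ε * R = n := by rw [hR]; field_simp
    unfold pen
    nlinarith
  have hcont : Continuous fun p : (Fin l → ℝ) × (Fin l → Fin n → ℝ) => pen F ε p.1 p.2 := by
    have := hF.continuous h D
    unfold pen
    fun_prop
  have hne : ((α₀, b₀) : (Fin l → ℝ) × (Fin l → Fin n → ℝ)) ∈
      {α : Fin l → ℝ | ∑ i, α i ^ 2 ≤ R} ×ˢ Set.pi Set.univ fun _ => atoms B N := by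
    refine ⟨?_, fun i _ => hb₀ i⟩
    by_contra hα
    exact absurd h0 (not_lt.2 (hout α₀ b₀ hα))
  obtain ⟨⟨α, b⟩, hab, hmax⟩ := (hcompact.prod
    (isCompact_univ_pi fun _ => isCompact_atoms h)).exists_isMaxOn ⟨_, hne⟩ hcont.continuousOn
  refine ⟨α, b, fun i => hab.2 i trivial, fun α' b' hb' => ?_⟩
  by_cases hα' : ∑ i, α' i ^ 2 ≤ R
  · exact hmax (a := (α', b')) ⟨hα', fun i _ => hb' i⟩
  · exact (hout α' b' hα').trans (h0.le.trans (hmax hne))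

/-- First-order conditions at a maximizer of the penalized surrogate: the gradient `g` splits as
`2 ε α i b i` plus a vector of the complement at `b i`, so it has an expansion along a frame
starting with `b i`. -/
lemma exists_expansion (h : Good B N) (D : DecompStruct B N) (hF : IsSpectral B N F) {ε : ℝ}
    (hε : 0 < ε) {l : ℕ} {α : Fin l → ℝ} {b : Fin l → Fin n → ℝ} (hb : ∀ i, b i ∈ atoms B N)
    (hmax : ∀ (α' : Fin l → ℝ) (b' : Fin l → Fin n → ℝ), (∀ i, b' i ∈ atoms B N) →
        pen F ε α' b' ≤ pen F ε α b)
    {k : ℕ} {c : Fin k → Fin n → ℝ} {μ : Fin k → ℝ} (hc : IsFrame B N c) (hμ : ∀ j, 0 ≤ μ j)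
    (hx : ∑ i, α i • b i = ∑ j, μ j • c j) (i : Fin l) (hi : α i ≠ 0) :
    ∃ (r : ℕ) (d : Fin r → Fin n → ℝ) (ν : Fin r → ℝ),
      IsFrame B N (Fin.cons (b i) d : Fin (r + 1) → Fin n → ℝ) ∧
      ∑ j, dw (μ j) • c j = ∑ s, (Fin.cons (2 * ε * α i) ν : Fin (r + 1) → ℝ) s •
        (Fin.cons (b i) d : Fin (r + 1) → Fin n → ℝ) s := by
  set g := ∑ j, dw (μ j) • c j with hg
  set x := ∑ i, α i • b i with hxdef
  have hvar : ∀ (α' : Fin l → ℝ) (b' : Fin l → Fin n → ℝ), (∀ i, b' i ∈ atoms B N) →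
      ∀ z, ∑ i, α' i • b' i = x + z →
      ip B g z - ip B z z ≤ ε * (∑ i, α' i ^ 2 - ∑ i, α i ^ 2) := by
    intro α' b' hb' z hz
    have h1 := hF.tangent h D hc hμ hx (x + z)
    have h2 := hmax α' b' hb'
    unfold pen at h2
    rw [hz, ← hxdef] at h2
    rw [add_sub_cancel_left, ← hg] at h1
    linarith
  -- varying the coefficient `α i`
  have hβ : ip B g (b i) = 2 * ε * α i := by
    have h1 : ∀ τ : ℝ, τ * (ip B g (b i) - 2 * ε * α i) ≤ (1 + ε) * τ ^ 2 := by
      intro τ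
      have h2 := hvar (α + Pi.single i τ) b hb (τ • b i) (by
        simp [add_smul, Finset.sum_add_distrib, Pi.single_apply, hxdef])
      have h3 : ∑ j, (α + Pi.single i τ : Fin l → ℝ) j ^ 2 - ∑ j, α j ^ 2 = 2 * τ * α i + τ ^ 2 := by
        rw [← Finset.sum_sub_distrib, Finset.sum_eq_single i]
        · simp only [Pi.add_apply, Pi.single_eq_same]
          ring
        · intro j _ hj
          simp [hj]
        · simp
      rw [h3, ip_smul_right, ip_smul_right, ip_smul_left, (hb i).2] at h2
      nlinarith
    set δ := ip B g (b i) - 2 * ε * α i with hδ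
    have h4 := h1 (δ / (2 * (1 + ε)))
    have h5 : δ ^ 2 ≤ 0 := by
      have e1 : δ / (2 * (1 + ε)) * δ = 2 * (δ ^ 2 / (4 * (1 + ε))) := by field_simp; ring
      have e2 : (1 + ε) * (δ / (2 * (1 + ε))) ^ 2 = δ ^ 2 / (4 * (1 + ε)) := by field_simp; ring
      rw [e1, e2] at h4
      have h6 : δ ^ 2 / (4 * (1 + ε)) ≤ 0 := by linarith
      rw [div_le_iff₀ (by positivity), zero_mul] at h6
      exact h6
    have h7 := pow_eq_zero_iff two_ne_zero |>.1 (le_antisymm h5 (sq_nonneg δ))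
    linarith
  -- varying the atom `b i`
  have htop : IsTop B N (α i • g + (2 * α i ^ 2) • b i) (b i) := by
    refine ⟨hb i, fun a ha => ?_⟩
    have h2 := hvar α (Function.update b i a) (fun j => by
        by_cases hj : j = i
        · subst hj; simpa using ha
        · simpa [hj] using hb j) (α i • (a - b i)) (by
      rw [← sub_eq_iff_eq_add', hxdef, ← Finset.sum_sub_distrib, Finset.sum_eq_single i]
      · simp [smul_sub]
      · intro j _ hj
        simp [hj]
      · simp)
    simp only [ip_smul_left, ip_smul_right, ip_sub_left, ip_sub_right, (hb i).2, ha.2, sub_self,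
      mul_zero, ip_comm h.pos (b i) a] at h2
    simp only [ip_add_left, ip_smul_left, (hb i).2, ip_comm h.pos (b i) a]
    nlinarith
  have hval : ip B (α i • g + (2 * α i ^ 2) • b i) (b i) = 2 * (ε + 1) * α i ^ 2 := by
    rw [ip_add_left, ip_smul_left, ip_smul_left, (hb i).2, hβ]
    ring
  have hmem := htop.sub_mem h D (by rw [hval]; positivity)
  have hmem2 : g - (2 * ε * α i) • b i ∈ perpSub B (D.T (b i)) := by
    have h1 := Submodule.smul_mem _ (α i)⁻¹ hmem
    rw [hval] at h1
    convert h1 using 1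
    rw [show α i • g + (2 * α i ^ 2) • b i - (2 * (ε + 1) * α i ^ 2) • b i =
      α i • (g - (2 * ε * α i) • b i) by module, smul_smul, inv_mul_cancel₀ hi, one_smul]
  obtain ⟨r, d, ν, hd, hsum⟩ := exists_decomp_perp h D (hb i) hmem2
  refine ⟨r, d, ν, hd, ?_⟩
  rw [Fin.sum_univ_succ]
  simp only [Fin.cons_zero, Fin.cons_succ]
  rw [← hsum]
  abel

/-- The counting step: at a maximizer each frame vector `c j` carries total overlap at least `1`
with the atoms `b i`, while each `b i` has total overlap at most `1` with the frame. -/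
lemma card_le_of_expansion (h : Good B N) {ε : ℝ}
    (hε : 0 < ε) {l : ℕ} {α : Fin l → ℝ} {b : Fin l → Fin n → ℝ} (hb : ∀ i, b i ∈ atoms B N)
    {k : ℕ} {c : Fin k → Fin n → ℝ} {μ : Fin k → ℝ} (hc : IsFrame B N c) (hμ : ∀ j, 0 < μ j)
    (hx : ∑ i, α i • b i = ∑ j, μ j • c j)
    (hexp : ∀ i, α i ≠ 0 → ∃ (r : ℕ) (d : Fin r → Fin n → ℝ) (ν : Fin r → ℝ),
      IsFrame B N (Fin.cons (b i) d : Fin (r + 1) → Fin n → ℝ) ∧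
      ∑ j, dw (μ j) • c j = ∑ s, (Fin.cons (2 * ε * α i) ν : Fin (r + 1) → ℝ) s •
        (Fin.cons (b i) d : Fin (r + 1) → Fin n → ℝ) s) : k ≤ l := by
  have hsign : ∀ i j, α i ≠ 0 → (0 < ip B (c j) (b i) → dw (μ j) = 2 * ε * α i) ∧
      (ip B (c j) (b i) < 0 → dw (μ j) = -(2 * ε * α i)) := by
    intro i j hi
    obtain ⟨r, d, ν, hd, heq⟩ := hexp i hi
    simpa using coeff_eq h hc hd heq j 0
  have habs : ∀ i j, α i ≠ 0 → ip B (c j) (b i) ≠ 0 → dw (μ j) = 2 * ε * |α i| := by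
    intro i j hi hij
    have hp := dw_pos (hμ j).le
    rcases lt_or_gt_of_ne hij with hlt | hgt
    · have h1 := (hsign i j hi).2 hlt
      have : α i < 0 := by by_contra hle; nlinarith [mul_nonneg hε.le (not_lt.1 hle)]
      rw [abs_of_neg this, h1]; ring
    · have h1 := (hsign i j hi).1 hgt
      have : 0 < α i := by by_contra hle; nlinarith [mul_nonneg hε.le (neg_nonneg.2 (not_lt.1 hle))]
      rw [abs_of_pos this, h1]
  have hterm : ∀ i j, 2 * ε * (α i * ip B (b i) (c j)) ≤ dw (μ j) * |ip B (c j) (b i)| := by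
    intro i j
    rw [ip_comm h.pos (b i)]
    by_cases hi : α i = 0
    · rw [hi, zero_mul, mul_zero]
      exact mul_nonneg (dw_pos (hμ j).le).le (abs_nonneg _)
    · rcases lt_trichotomy (ip B (c j) (b i)) 0 with hlt | heq | hgt
      · rw [abs_of_neg hlt, (hsign i j hi).2 hlt]
        exact le_of_eq (by ring)
      · simp [heq]
      · rw [abs_of_pos hgt, (hsign i j hi).1 hgt]
        exact le_of_eq (by ring)
  have hcoef : ∀ j, μ j = ∑ i, α i * ip B (b i) (c j) := by
    intro j
    rw [← hc.ip_sum μ j, ← hx, ip_sum_left]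
    simp only [ip_smul_left]
  have hbb : ∀ i i', 0 ≤ α i * (α i' * ip B (b i') (b i)) := by
    intro i i'
    by_cases hi : α i = 0
    · simp [hi]
    by_cases hi' : α i' = 0
    · simp [hi']
    obtain ⟨r, d, ν, hd, heq⟩ := hexp i hi
    obtain ⟨r', d', ν', hd', heq'⟩ := hexp i' hi'
    have h1 := coeff_eq h hd' hd (heq'.symm.trans heq) 0 0
    simp only [Fin.cons_zero] at h1
    have hε2 : 2 * ε ≠ 0 := by positivity
    rcases lt_trichotomy (ip B (b i') (b i)) 0 with hlt | h0 | hgt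
    · have h2 : α i' = -α i := mul_left_cancel₀ hε2 (by rw [h1.2 hlt]; ring)
      rw [h2]
      nlinarith [mul_nonneg (sq_nonneg (α i)) (neg_nonneg.2 hlt.le)]
    · simp [h0]
    · have h2 : α i' = α i := mul_left_cancel₀ hε2 (h1.1 hgt)
      rw [h2]
      nlinarith [mul_nonneg (sq_nonneg (α i)) hgt.le]
  have hα : ∀ i j, α i ≠ 0 → ip B (c j) (b i) ≠ 0 → |α i| ≤ μ j := by
    intro i j hi hij
    set x := ∑ i, α i • b i with hxdef
    have h1 : α i ^ 2 ≤ α i * ip B x (b i) := by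
      rw [hxdef, ip_sum_left, Finset.mul_sum]
      simp only [ip_smul_left]
      refine le_trans (le_of_eq ?_) (Finset.single_le_sum (fun i' _ => hbb i i')
        (Finset.mem_univ i))
      rw [(hb i).2]; ring
    have h2 : |ip B x (b i)| ≤ μ j := by
      rw [hx, ip_sum_left]
      simp only [ip_smul_left]
      calc |∑ j', μ j' * ip B (c j') (b i)| ≤ ∑ j', |μ j' * ip B (c j') (b i)| :=
            Finset.abs_sum_le_sum_abs _ _
        _ = ∑ j', μ j * |ip B (c j') (b i)| := by
            refine Finset.sum_congr rfl fun j' _ => ?_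
            rw [abs_mul, abs_of_pos (hμ j')]
            by_cases hij' : ip B (c j') (b i) = 0
            · simp [hij']
            · rw [dw_injective (hμ j').le (hμ j).le
                ((habs i j' hi hij').trans (habs i j hi hij).symm)]
        _ = μ j * ∑ j', |ip B (c j') (b i)| := by rw [Finset.mul_sum]
        _ ≤ μ j := mul_le_of_le_one_right (hμ j).le (hc.sum_atom_le (hb i))
    have h3 : α i * ip B x (b i) ≤ |α i| * μ j :=
      (le_abs_self _).trans (by rw [abs_mul]; gcongr)
    have h4 : 0 < |α i| := abs_pos.2 hi
    rw [← sq_abs, sq] at h1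
    exact le_of_mul_le_mul_left (h1.trans h3) h4
  have hf : ∀ j, dw (μ j) ≤ 2 * ε * μ j := by
    intro j
    obtain ⟨i, -, hi⟩ : ∃ i ∈ Finset.univ, α i * ip B (b i) (c j) ≠ 0 :=
      Finset.exists_ne_zero_of_sum_ne_zero (by rw [← hcoef j]; exact (hμ j).ne')
    have hi1 := left_ne_zero_of_mul hi
    have hi2 := right_ne_zero_of_mul hi
    rw [ip_comm h.pos] at hi2
    rw [habs i j hi1 hi2]
    have := hα i j hi1 hi2
    gcongr
  have hge : ∀ j, 1 ≤ ∑ i, |ip B (c j) (b i)| := by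
    intro j
    have hpos : 0 < 2 * ε * μ j := by have := hμ j; positivity
    have h1 : 2 * ε * μ j ≤ 2 * ε * μ j * ∑ i, |ip B (c j) (b i)| := by
      calc 2 * ε * μ j = ∑ i, 2 * ε * (α i * ip B (b i) (c j)) := by
            rw [← Finset.mul_sum, ← hcoef j]
        _ ≤ ∑ i, dw (μ j) * |ip B (c j) (b i)| := Finset.sum_le_sum fun i _ => hterm i j
        _ = dw (μ j) * ∑ i, |ip B (c j) (b i)| := by rw [Finset.mul_sum]
        _ ≤ _ := mul_le_mul_of_nonneg_right (hf j) (Finset.sum_nonneg fun _ _ => abs_nonneg _)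
    exact le_of_mul_le_mul_left (by linarith) hpos
  have hfin : (k : ℝ) ≤ l := by
    calc (k : ℝ) = ∑ j : Fin k, (1 : ℝ) := by simp
      _ ≤ ∑ j, ∑ i, |ip B (c j) (b i)| := Finset.sum_le_sum fun j _ => hge j
      _ = ∑ i, ∑ j, |ip B (c j) (b i)| := Finset.sum_comm
      _ ≤ ∑ i : Fin l, (1 : ℝ) := Finset.sum_le_sum fun i _ => hc.sum_atom_le (hb i)
      _ = l := by simp
  exact_mod_cast hfin

/-- A combination of `l` atoms is never a positive combination of a frame with more than `l`
elements. -/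
lemma card_le_of_combination (h : Good B N) (D : DecompStruct B N) {k l : ℕ}
    {c : Fin k → Fin n → ℝ} {μ : Fin k → ℝ} (hc : IsFrame B N c) (hμ : ∀ j, 0 < μ j)
    {α : Fin l → ℝ} {b : Fin l → Fin n → ℝ} (hb : ∀ i, b i ∈ atoms B N)
    (hx : ∑ j, μ j • c j = ∑ i, α i • b i) : k ≤ l := by
  by_contra hlt
  push Not at hlt
  obtain ⟨F, hF⟩ := exists_isSpectral h D
  -- scaling the vector up brings the surrogate above `l`
  have hlim : Filter.Tendsto (fun t : ℝ => ∑ j, w (t * μ j)) Filter.atTop (nhds (k : ℝ)) := by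
    have h1 : ∀ j, Filter.Tendsto (fun t : ℝ => w (t * μ j)) Filter.atTop (nhds 1) := by
      intro j
      have h2 : Filter.Tendsto (fun t : ℝ => 1 + t * μ j) Filter.atTop Filter.atTop :=
        Filter.tendsto_atTop_add_const_left _ _ (Filter.tendsto_id.atTop_mul_const (hμ j))
      have h3 := (tendsto_const_nhds (x := (1 : ℝ))).sub (tendsto_inv_atTop_zero.comp h2)
      rw [sub_zero] at h3
      refine h3.congr' ?_
      filter_upwards [Filter.eventually_ge_atTop 0] with t ht
      have : 0 < 1 + t * μ j := by have := hμ j; positivity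
      simp only [Function.comp, w]
      field_simp
      ring
    simpa using tendsto_finsetSum Finset.univ fun j _ => h1 j
  obtain ⟨t, ht1, ht0⟩ := ((hlim.eventually_const_lt (Nat.cast_lt.2 hlt)).and
    (Filter.eventually_ge_atTop (0 : ℝ))).exists
  have hFt : F (∑ i, (t * α i) • b i) = ∑ j, w (t * μ j) := by
    rw [← hF k c (fun j => t * μ j) hc fun j => mul_nonneg ht0 (hμ j).le]
    simp only [← smul_smul, ← Finset.smul_sum, hx]
  set δ := ∑ j, w (t * μ j) - l with hδ
  have hδ0 : 0 < δ := sub_pos.2 ht1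
  set A := ∑ i, (t * α i) ^ 2 with hA
  have hA0 : 0 ≤ A := Finset.sum_nonneg fun i _ => sq_nonneg _
  -- with this penalty weight the maximum still exceeds `l`
  set ε := δ / (2 * (A + 1)) with hε
  have hε0 : 0 < ε := by positivity
  have hpen : (l : ℝ) < pen F ε (fun i => t * α i) b := by
    unfold pen
    rw [hFt, ← hA]
    have : ε * (2 * (A + 1)) = δ := by rw [hε]; field_simp
    nlinarith
  obtain ⟨α', b', hb', hmax⟩ := exists_pen_max h D hF hε0 hb
    (lt_of_le_of_lt (Nat.cast_nonneg l) hpen)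
  obtain ⟨k', c', μ', hc', hμ', hx'⟩ := exists_decomp h D (∑ i, α' i • b' i)
  have h1 : k' ≤ l := card_le_of_expansion h hε0 hb' hc' hμ' hx' fun i hi =>
    exists_expansion h D hF hε0 hb' hmax hc' (fun j => (hμ' j).le) hx' i hi
  have h2 := hF.le_card hc' (fun j => (hμ' j).le) hx'
  have h3 := hpen.trans_le (hmax _ b hb)
  unfold pen at h3
  have h4 : 0 ≤ ε * ∑ i, α' i ^ 2 :=
    mul_nonneg hε0.le (Finset.sum_nonneg fun i _ => sq_nonneg _)
  have h5 : (k' : ℝ) ≤ l := Nat.cast_le.2 h1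
  linarith

end LowerBound

/-- **Lemma 9.** For a decomposable norm with unit-norm extreme points,
`l(x) = K(x)` for every `x`. -/
theorem lfun_eq_Kfun {n : ℕ}
    (B : Matrix (Fin n) (Fin n) ℝ) (hB : B.PosDef)
    (N : (Fin n → ℝ) → ℝ) (hN : IsNorm N)
    (hExt : ∀ a ∈ extPts N, normu B a = 1)
    (D : DecompStruct B N) :
    ∀ x : Fin n → ℝ, (lfun N x : ℝ) = Kfun B N D x := by
  intro x
  have h : Good B N := ⟨hB, hN, hExt⟩
  obtain ⟨k, c, μ, hc, hμ, hx⟩ := exists_decomp h D x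
  rw [Kfun_eq_card h D hc hμ hx, Nat.cast_inj]
  have hmem : ∃ (bb : Fin k → Fin n → ℝ) (α : Fin k → ℝ),
      (∀ i, bb i ∈ extPts N) ∧ x = ∑ i, α i • bb i :=
    ⟨c, μ, fun j => atoms_subset_extPts h (hc.atom j), hx⟩
  refine le_antisymm (Nat.sInf_le hmem) (le_csInf ⟨k, hmem⟩ ?_)
  rintro l ⟨bb, α, hbb, hx'⟩
  exact card_le_of_combination h D hc hμ (fun i => extPts_subset_atoms h (hbb i))
    (hx.symm.trans hx')

end PGH
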